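/- Periodic minimum problem, small domains, intermediate volume fraction: let τ ∈ (0,1), 0 < L ≤ min{τ, 1−τ} and L ≤ σ ≤ 1−L. Then 2L + 2·min{σ, 1−σ, τ, 1−τ} is the least element of the set of values E^{#}_τ(v) as v ranges over Adm(L,σ): every v ∈ Adm(L,σ) satisfies E^{#}_τ(v) ≥ 2L + 2·min{σ, 1−σ, τ, 1−τ}, and the constant function v ≡ σ attains this value. -/

import Mathlib

open MeasureTheory Filter Set

noncomputable section

/-- `Adm L σ v` : `v` is admissible, i.e. `0 ≤ v ≤ 1` on `(0,L)`, `v` has finite pointwise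
total variation on `(0,L)` and `∫_{(0,L)} v = σL`. -/
def Adm (L σ : ℝ) (v : ℝ → ℝ) : Prop :=
  (∀ x ∈ Set.Ioo 0 L, 0 ≤ v x ∧ v x ≤ 1) ∧
  BoundedVariationOn v (Set.Ioo 0 L) ∧
  (∫ x in Set.Ioo 0 L, v x) = σ * L

/-- The interior part of the limit functional:
`2·λ({x ∈ (0,L) : 0 < v(x) < 1}) + Var(v;(0,L))`. -/
def Fvol (L : ℝ) (v : ℝ → ℝ) : ℝ :=
  2 * (volume {x ∈ Set.Ioo 0 L | 0 < v x ∧ v x < 1}).toReal +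
    (eVariationOn v (Set.Ioo 0 L)).toReal

/-- The boundary term `φ_τ(x,y) = λ( [0,1] ∩ ( ([−τ,x−τ] ∪ [1−τ,x+1−τ]) Δ [0,y] ) )`. -/
def phi (τ x y : ℝ) : ℝ :=
  (volume (Set.Icc (0 : ℝ) 1 ∩
    symmDiff (Set.Icc (-τ) (x - τ) ∪ Set.Icc (1 - τ) (x + 1 - τ)) (Set.Icc 0 y))).toReal


lemma phi_formula (τ a b : ℝ) (hτ : τ ∈ Set.Ioo (0 : ℝ) 1) (ha : 0 ≤ a ∧ a ≤ 1)
    (hb : 0 ≤ b ∧ b ≤ 1) :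
    phi τ a b = a + b - 2 * (max 0 (min (a - τ) b) + max 0 (min (a + 1 - τ) b - (1 - τ))) := by
  obtain ⟨h0, h1⟩ := hτ
  obtain ⟨ha0, ha1⟩ := ha
  obtain ⟨hb0, hb1⟩ := hb
  have hU : ∀ p q r : ℝ, p ≤ r →
      volume.real (Icc 0 p ∪ Icc r q) = max 0 p + max 0 (q - r) := by
    intro p q r hpr
    have h := measureReal_union_add_inter (μ := volume) (s := Icc 0 p) (t := Icc r q)
      measurableSet_Icc (by simp) (by simp)
    have h2 : volume.real (Icc 0 p ∩ Icc r q) = 0 := by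
      rw [Icc_inter_Icc, Real.volume_real_Icc]
      apply max_eq_right
      have := min_le_left p q
      have := le_max_right 0 r
      linarith
    rw [h2, Real.volume_real_Icc, Real.volume_real_Icc] at h
    rw [max_comm 0, max_comm 0]
    simpa using h
  have e : Icc (0 : ℝ) 1 ∩
    symmDiff (Icc (-τ) (a - τ) ∪ Icc (1 - τ) (a + 1 - τ)) (Icc 0 b)
     = symmDiff (Icc 0 (a - τ) ∪ Icc (1 - τ) (min (a + 1 - τ) 1)) (Icc 0 b) := by
    ext x
    simp only [mem_inter_iff, mem_symmDiff, mem_union, mem_Icc, le_min_iff]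
    grind
  have e2 : (Icc 0 (a - τ) ∪ Icc (1 - τ) (min (a + 1 - τ) 1)) ∩ Icc 0 b
     = Icc 0 (min (a - τ) b) ∪ Icc (1 - τ) (min (a + 1 - τ) b) := by
    ext x
    simp only [mem_inter_iff, mem_union, mem_Icc, le_min_iff]
    grind
  unfold phi
  rw [e]
  set X := Icc 0 (a - τ) ∪ Icc (1 - τ) (min (a + 1 - τ) 1) with hX
  have hXm : MeasurableSet X := measurableSet_Icc.union measurableSet_Icc
  have hXf : volume X ≠ ⊤ := by
    apply ne_top_of_le_ne_top _ (measure_union_le _ _)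
    simp
  have hYf : volume (Icc 0 b) ≠ ⊤ := by simp
  change volume.real _ = _
  rw [measureReal_symmDiff_eq hXm measurableSet_Icc hXf hYf]
  have k1 := measureReal_inter_add_sdiff (μ := volume) (s := X) (t := Icc 0 b) measurableSet_Icc hXf
  have k2 := measureReal_inter_add_sdiff (μ := volume) (s := Icc 0 b) (t := X) hXm hYf
  rw [inter_comm, e2, hU _ _ _ ((min_le_left _ _).trans (by linarith)), Real.volume_real_Icc] at k2
  rw [e2, hU _ _ _ ((min_le_left _ _).trans (by linarith)), hX, hU _ _ _ (by linarith), ← hX] at k1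
  have k3 : max 0 (a - τ) + max 0 (min (a + 1 - τ) 1 - (1 - τ)) = a := by
    grind
  have k4 : max (b - 0) 0 = b := by grind
  linarith

lemma phi_lip1 (τ a b c : ℝ) (hτ : τ ∈ Set.Ioo (0 : ℝ) 1) (ha : 0 ≤ a ∧ a ≤ 1)
    (hb : 0 ≤ b ∧ b ≤ 1) (hc : 0 ≤ c ∧ c ≤ 1) : phi τ c b ≤ phi τ a b + |a - c| := by
  rw [phi_formula τ a b hτ ha hb, phi_formula τ c b hτ hc hb]
  obtain ⟨h0, h1⟩ := hτ
  grind

lemma phi_lip2 (τ a b c : ℝ) (hτ : τ ∈ Set.Ioo (0 : ℝ) 1) (ha : 0 ≤ a ∧ a ≤ 1)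
    (hb : 0 ≤ b ∧ b ≤ 1) (hc : 0 ≤ c ∧ c ≤ 1) : phi τ a c ≤ phi τ a b + |c - b| := by
  rw [phi_formula τ a b hτ ha hb, phi_formula τ a c hτ ha hc]
  obtain ⟨h0, h1⟩ := hτ
  grind

lemma phi_diag (τ c : ℝ) (hτ : τ ∈ Set.Ioo (0 : ℝ) 1) (hc : 0 ≤ c ∧ c ≤ 1) :
    phi τ c c = 2 * min (min c (1 - c)) (min τ (1 - τ)) := by
  rw [phi_formula τ c c hτ hc hc]
  obtain ⟨h0, h1⟩ := hτ
  grind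

/-- off-diagonal bound: `φ` dominates the difference of the masses. -/
lemma phi_abs (τ a b : ℝ) (hτ : τ ∈ Set.Ioo (0 : ℝ) 1) (ha : 0 ≤ a ∧ a ≤ 1)
    (hb : 0 ≤ b ∧ b ≤ 1) : |a - b| ≤ phi τ a b := by
  rw [phi_formula τ a b hτ ha hb]
  obtain ⟨h0, h1⟩ := hτ
  grind

lemma var_bound (L : ℝ) (v : ℝ → ℝ) (a b : ℝ) (hv : BoundedVariationOn v (Ioo 0 L))
    (ha : Tendsto v (nhdsWithin 0 (Ioo 0 L)) (nhds a))
    (hb : Tendsto v (nhdsWithin L (Ioo 0 L)) (nhds b)) (x y : ℝ) (hx : x ∈ Ioo 0 L)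
    (hy : y ∈ Ioo 0 L) (hxy : x ≤ y) :
    |a - v x| + |v x - v y| + |v y - b| ≤ (eVariationOn v (Ioo 0 L)).toReal := by
  have hL : 0 < L := hx.1.trans hx.2
  have key : ∀ s ∈ Ioo 0 L, ∀ t ∈ Ioo 0 L, s ≤ x → y ≤ t →
      |v s - v x| + |v x - v y| + |v y - v t| ≤ (eVariationOn v (Ioo 0 L)).toReal := by
    intro s hs t ht hsx hyt
    have e1 := eVariationOn.Icc_add_Icc v (s := Ioo 0 L) hsx hxy hx
    have e2 := eVariationOn.Icc_add_Icc v (s := Ioo 0 L) (hsx.trans hxy) hyt hy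
    have e3 : eVariationOn v (Ioo 0 L ∩ Icc s t) ≤ eVariationOn v (Ioo 0 L) :=
      eVariationOn.mono v inter_subset_left
    have d1 := eVariationOn.edist_le v (s := Ioo 0 L ∩ Icc s x) (x := s) (y := x)
      ⟨hs, le_rfl, hsx⟩ ⟨hx, hsx, le_rfl⟩
    have d2 := eVariationOn.edist_le v (s := Ioo 0 L ∩ Icc x y) (x := x) (y := y)
      ⟨hx, le_rfl, hxy⟩ ⟨hy, hxy, le_rfl⟩
    have d3 := eVariationOn.edist_le v (s := Ioo 0 L ∩ Icc y t) (x := y) (y := t)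
      ⟨hy, le_rfl, hyt⟩ ⟨ht, hyt, le_rfl⟩
    have : edist (v s) (v x) + edist (v x) (v y) + edist (v y) (v t) ≤ eVariationOn v (Ioo 0 L) := by
      calc _ ≤ _ := add_le_add (add_le_add d1 d2) d3
        _ ≤ _ := by rw [e1, e2]; exact e3
    rw [edist_dist, edist_dist, edist_dist, ← ENNReal.ofReal_add dist_nonneg dist_nonneg,
      ← ENNReal.ofReal_add (add_nonneg dist_nonneg dist_nonneg) dist_nonneg,
      ENNReal.ofReal_le_iff_le_toReal hv] at this
    simpa [Real.dist_eq] using this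
  have n1 : (nhdsWithin 0 (Ioo 0 L)).NeBot := left_nhdsWithin_Ioo_neBot hL
  have n2 : (nhdsWithin L (Ioo 0 L)).NeBot := right_nhdsWithin_Ioo_neBot hL
  have f1 : ∀ᶠ s in nhdsWithin 0 (Ioo 0 L), s ∈ Ioo 0 L ∧ s ≤ x :=
    eventually_mem_nhdsWithin.and (eventually_nhdsWithin_of_eventually_nhds (eventually_le_nhds hx.1))
  have f2 : ∀ᶠ s in nhdsWithin L (Ioo 0 L), s ∈ Ioo 0 L ∧ y ≤ s :=
    eventually_mem_nhdsWithin.and (eventually_nhdsWithin_of_eventually_nhds (eventually_ge_nhds hy.2))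
  have key2 : ∀ t ∈ Ioo 0 L, y ≤ t →
      |a - v x| + |v x - v y| + |v y - v t| ≤ (eVariationOn v (Ioo 0 L)).toReal := by
    intro t ht hyt
    refine le_of_tendsto (((ha.sub_const (v x)).abs.add_const _).add_const _) ?_
    filter_upwards [f1] with s hs using key s hs.1 t ht hs.2 hyt
  refine le_of_tendsto ((hb.const_sub (v y)).abs.const_add _) ?_
  filter_upwards [f2] with t ht using key2 t ht.1 ht.2

/-- mass estimate: if `0 ≤ w ≤ K` and `w` vanishes off `S`, then `mass ≤ K |S|`. -/
lemma mass_bound (L K : ℝ) (w : ℝ → ℝ) (S : Set ℝ) (hS : S ⊆ Ioo 0 L)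
    (hw : IntegrableOn w (Ioo 0 L)) (hK : ∀ x ∈ Ioo 0 L, w x ≤ K)
    (h0 : ∀ x ∈ Ioo 0 L, x ∉ S → w x = 0) :
    ∫ x in Ioo 0 L, w x ≤ K * volume.real S := by
  have e : ∫ x in Ioo 0 L, w x = ∫ x in S, w x :=
    setIntegral_eq_of_subset_of_ae_sdiff_eq_zero measurableSet_Ioo.nullMeasurableSet hS
      (Eventually.of_forall fun x hx => h0 x hx.1 hx.2)
  have hfin : volume S ≠ ⊤ := ne_top_of_le_ne_top (by simp) (measure_mono hS)
  rw [e]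
  calc ∫ x in S, w x ≤ ∫ x in S, K := by
        refine integral_mono_ae (hw.mono_set hS) (integrableOn_const hfin) ?_
        exact ae_restrict_of_ae_restrict_of_subset hS
          ((ae_restrict_mem measurableSet_Ioo).mono hK)
    _ = K * volume.real S := by simp [mul_comm]

lemma arith (L σ ℓ K : ℝ) (h0 : 0 < L) (h1 : L ≤ σ) (hℓ0 : 0 ≤ ℓ) (hℓ : ℓ ≤ L)
    (h : σ * L ≤ K * ℓ) : L + σ ≤ ℓ + K := by
  have hp : 0 < ℓ := by
    rcases hℓ0.eq_or_lt with h' | h'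
    · subst h'; nlinarith
    · exact h'
  have : 0 ≤ (K - σ - (L - ℓ)) * ℓ := by nlinarith [mul_nonneg (sub_nonneg.2 hℓ) (sub_nonneg.2 (hℓ.trans h1))]
  have := nonneg_of_mul_nonneg_left this hp
  linarith

theorem periodic_min_small_domain_intermediate (τ σ L : ℝ)
    (hτ : τ ∈ Set.Ioo (0 : ℝ) 1) (hL0 : 0 < L) (hL : L ≤ min τ (1 - τ))
    (hσ1 : L ≤ σ) (hσ2 : σ ≤ 1 - L) :
    (∀ v : ℝ → ℝ, ∀ a b : ℝ, Adm L σ v →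
        Tendsto v (nhdsWithin 0 (Set.Ioo 0 L)) (nhds a) →
        Tendsto v (nhdsWithin L (Set.Ioo 0 L)) (nhds b) →
        2 * L + 2 * min (min σ (1 - σ)) (min τ (1 - τ)) ≤ Fvol L v + phi τ a b) ∧
    (Adm L σ (fun _ => σ) ∧
      Fvol L (fun _ => σ) + phi τ σ σ = 2 * L + 2 * min (min σ (1 - σ)) (min τ (1 - τ))) := by
  have hσ : 0 ≤ σ ∧ σ ≤ 1 := ⟨by linarith, by linarith⟩
  have hσ' : 0 < σ ∧ σ < 1 := ⟨by linarith, by linarith⟩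
  have hvar0 : eVariationOn (fun _ : ℝ => σ) (Ioo 0 L) = 0 := by
    apply eVariationOn.constant_on
    rintro _ ⟨x, _, rfl⟩ _ ⟨y, _, rfl⟩
    rfl
  refine ⟨?_, ⟨fun _ _ => hσ, ?_, ?_⟩, ?_⟩
  rotate_left
  · unfold BoundedVariationOn
    rw [hvar0]; simp
  · simp [hL0.le, mul_comm]
  · rw [phi_diag τ σ hτ hσ]
    unfold Fvol
    rw [hvar0]
    have : {x ∈ Ioo 0 L | 0 < σ ∧ σ < 1} = Ioo 0 L := by
      ext x; simp [hσ'.1, hσ'.2]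
    rw [this]
    simp [hL0.le]
  intro v a b ⟨hv, hbv, hint⟩ ha hb
  have n1 : (nhdsWithin 0 (Ioo 0 L)).NeBot := left_nhdsWithin_Ioo_neBot hL0
  have n2 : (nhdsWithin L (Ioo 0 L)).NeBot := right_nhdsWithin_Ioo_neBot hL0
  have ha' : 0 ≤ a ∧ a ≤ 1 :=
    ⟨ge_of_tendsto ha (eventually_mem_nhdsWithin.mono fun x hx => (hv x hx).1),
     le_of_tendsto ha (eventually_mem_nhdsWithin.mono fun x hx => (hv x hx).2)⟩
  have hb' : 0 ≤ b ∧ b ≤ 1 :=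
    ⟨ge_of_tendsto hb (eventually_mem_nhdsWithin.mono fun x hx => (hv x hx).1),
     le_of_tendsto hb (eventually_mem_nhdsWithin.mono fun x hx => (hv x hx).2)⟩
  have hI : IntegrableOn v (Ioo 0 L) := by
    by_contra h
    rw [integral_undef h] at hint
    have := mul_pos hσ'.1 hL0
    linarith
  have hvar := var_bound L v a b hbv ha hb
  unfold Fvol
  set V := (eVariationOn v (Ioo 0 L)).toReal with hV
  set S := {x ∈ Ioo 0 L | 0 < v x ∧ v x < 1} with hSdef
  change _ ≤ 2 * volume.real S + V + _
  have hS : S ⊆ Ioo 0 L := fun x hx => hx.1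
  have hℓ : volume.real S ≤ L := by
    have := measureReal_mono (μ := volume) hS (by simp)
    simpa [hL0.le] using this
  have hℓ0 : 0 ≤ volume.real S := measureReal_nonneg
  -- a path through two values `p`, `q`
  have step : ∀ p q : ℝ, 0 ≤ p ∧ p ≤ 1 → 0 ≤ q ∧ q ≤ 1 →
      phi τ p q ≤ phi τ a b + |a - p| + |q - b| := by
    intro p q hp hq
    have := phi_lip1 τ a b p hτ ha' hb' hp
    have := phi_lip2 τ p b q hτ hp hb' hq
    linarith
  have two : ∀ x ∈ Ioo 0 L, ∀ y ∈ Ioo 0 L, 2 * |v x - v y| ≤ V + phi τ a b := by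
    have aux : ∀ x ∈ Ioo 0 L, ∀ y ∈ Ioo 0 L, x ≤ y → 2 * |v x - v y| ≤ V + phi τ a b := by
      intro x hx y hy hxy
      have h1 := hvar x y hx hy hxy
      have h2 := step (v x) (v y) (hv x hx) (hv y hy)
      have h3 := phi_abs τ (v x) (v y) hτ (hv x hx) (hv y hy)
      linarith
    intro x hx y hy
    rcases le_total x y with h | h
    · exact aux x hx y hy h
    · rw [abs_sub_comm]; exact aux y hy x hx h
  have hm1 : min (min σ (1 - σ)) (min τ (1 - τ)) ≤ σ := (min_le_left _ _).trans (min_le_left _ _)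
  have hm2 : min (min σ (1 - σ)) (min τ (1 - τ)) ≤ 1 - σ :=
    (min_le_left _ _).trans (min_le_right _ _)
  by_cases hz : ∃ y ∈ Ioo 0 L, v y = 0
  · obtain ⟨y, hy, hy0⟩ := hz
    by_cases ho : ∃ x ∈ Ioo 0 L, v x = 1
    · obtain ⟨x, hx, hx1⟩ := ho
      have := two x hx y hy
      rw [hx1, hy0] at this
      norm_num at this
      linarith
    · push Not at ho
      have := mass_bound L ((V + phi τ a b) / 2) v S hS hI (fun x hx => by
        have := two x hx y hy
        rw [hy0, sub_zero, abs_of_nonneg (hv x hx).1] at this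
        linarith) (fun x hx hxS => by
        by_contra h
        exact hxS ⟨hx, lt_of_le_of_ne (hv x hx).1 (Ne.symm h),
          lt_of_le_of_ne (hv x hx).2 (ho x hx)⟩)
      rw [hint] at this
      have := arith L σ _ _ hL0 hσ1 hℓ0 hℓ this
      linarith
  · push Not at hz
    by_cases ho : ∃ x ∈ Ioo 0 L, v x = 1
    · obtain ⟨y, hy, hy1⟩ := ho
      have hc : IntegrableOn (fun _ : ℝ => (1 : ℝ)) (Ioo 0 L) := integrableOn_const (by simp)
      have := mass_bound L ((V + phi τ a b) / 2) (fun x => 1 - v x) S hS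
        (hc.sub hI) (fun x hx => by
        have := two y hy x hx
        rw [hy1, abs_of_nonneg (by linarith [(hv x hx).2])] at this
        linarith) (fun x hx hxS => by
        by_contra h
        exact hxS ⟨hx, lt_of_le_of_ne (hv x hx).1 (Ne.symm (hz x hx)),
          lt_of_le_of_ne (hv x hx).2 (fun h' => h (by rw [h']; ring))⟩)
      rw [integral_sub hc hI, hint] at this
      simp only [integral_const, smul_eq_mul, mul_one, measureReal_restrict_apply_univ,
        Real.volume_real_Ioo_of_le hL0.le] at this
      have := arith L (1 - σ) _ ((V + phi τ a b) / 2) hL0 (by linarith) hℓ0 hℓ (by linarith)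
      linarith
    · push Not at ho
      have hSeq : S = Ioo 0 L := by
        apply Subset.antisymm hS
        intro x hx
        exact ⟨hx, lt_of_le_of_ne (hv x hx).1 (Ne.symm (hz x hx)),
          lt_of_le_of_ne (hv x hx).2 (ho x hx)⟩
      have hSL : volume.real S = L := by
        rw [hSeq, Real.volume_real_Ioo_of_le hL0.le, sub_zero]
      have hav : ⨍ x in Ioo 0 L, v x = σ := by
        rw [setAverage_eq, hint, Real.volume_real_Ioo_of_le hL0.le, sub_zero, smul_eq_mul]
        field_simp
      have hne : volume (Ioo 0 L) ≠ 0 := by simp [hL0]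
      obtain ⟨x, hx, hxσ⟩ := exists_le_setAverage (μ := volume) hne (by simp) hI
      obtain ⟨y, hy, hyσ⟩ := exists_setAverage_le (μ := volume) hne (by simp) hI
      rw [hav] at hxσ hyσ
      have h2 := step σ σ hσ hσ
      rw [phi_diag τ σ hτ hσ] at h2
      rw [hSL]
      have h3 : |a - σ| + |σ - b| ≤ V := by
        rcases le_total x y with h | h
        · refine le_trans ?_ (hvar x y hx hy h)
          have := abs_sub_le a (v x) σ
          have := abs_sub_le σ (v y) b
          rw [abs_of_nonpos (by linarith : v x - v y ≤ 0)]
          rw [abs_of_nonpos (by linarith : v x - σ ≤ 0)] at *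
          rw [abs_of_nonpos (by linarith : σ - v y ≤ 0)] at *
          linarith
        · refine le_trans ?_ (hvar y x hy hx h)
          have := abs_sub_le a (v y) σ
          have := abs_sub_le σ (v x) b
          rw [abs_of_nonneg (by linarith : 0 ≤ v y - v x)]
          rw [abs_of_nonneg (by linarith : 0 ≤ v y - σ)] at *
          rw [abs_of_nonneg (by linarith : 0 ≤ σ - v x)] at *
          linarith
      linarith
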